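/- Let H₁, H₂, H₃ be complex Hilbert spaces and let T₁ : H₁ → H₂ and T₂ : H₂ → H₃ be densely defined, closed linear operators with range(T₁) ⊆ ker(T₂). Suppose there exists a finite-dimensional subspace L ⊆ dom(T₁*) ∩ ker(T₂) such that ker(T₂) ∩ L^⊥ = P_{L^⊥}(range(T₁)) (where P_{L^⊥} is the orthogonal projection of H₂ onto L^⊥) and the range of the restriction of T₂ to dom(T₂) ∩ L^⊥ is closed in H₃. Then there exists a constant c > 0 such that ‖T₁*u‖² + ‖T₂u‖² ≥ c‖u‖² for all u ∈ dom(T₁*) ∩ dom(T₂) with u ⊥ L. -/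

import Mathlib

open scoped LinearPMap InnerProductSpace

/-!
Put `K = Lᗮ` and let `N = ker T₂ ⊓ K`, a closed subspace. By Pythagoras
`‖u‖² = ‖P_N u‖² + ‖u - P_N u‖²`, and for `u ∈ K` each term is controlled by one operator.

* Since `N` lies in the range of `P_K ∘ T₁`, the open mapping theorem gives `x` with
  `P_K (T₁ x) = P_N u` and `‖x‖ ≤ C ‖P_N u‖`; then
  `‖P_N u‖² = ⟪u, P_K (T₁ x)⟫ = ⟪u, T₁ x⟫ = ⟪T₁* u, x⟫ ≤ C ‖T₁* u‖ ‖P_N u‖`.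
* Since `T₂` restricted to `K` has closed range, the open mapping theorem gives `v ∈ K` with
  `T₂ v = T₂ u` and `‖v‖ ≤ D ‖T₂ u‖`; then `u - v ∈ N`, so `‖u - P_N u‖ ≤ ‖v‖`.
-/

section OpenMapping

variable {𝕜 E F G : Type*} [NontriviallyNormedField 𝕜]
  [NormedAddCommGroup E] [NormedSpace 𝕜 E] [CompleteSpace E]
  [NormedAddCommGroup F] [NormedSpace 𝕜 F]
  [NormedAddCommGroup G] [NormedSpace 𝕜 G]

theorem exists_preimage_norm_le_of_le_range (f : E →L[𝕜] F) (S : Submodule 𝕜 F)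
    [CompleteSpace S] (hS : S ≤ LinearMap.range f.toLinearMap) :
    ∃ C > 0, ∀ y ∈ S, ∃ x, f x = y ∧ ‖x‖ ≤ C * ‖y‖ := by
  let p : Submodule 𝕜 E := S.comap f.toLinearMap
  have : CompleteSpace p :=
    ((completeSpace_coe_iff_isComplete.mp ‹_›).isClosed.preimage f.continuous).completeSpace_coe
  let g : p →L[𝕜] S := f.restrict fun _ hx => hx
  have hg : Function.Surjective g := by
    rintro ⟨y, hy⟩
    obtain ⟨x, rfl⟩ := hS hy
    exact ⟨⟨x, hy⟩, rfl⟩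
  obtain ⟨C, hC, hbound⟩ := g.exists_preimage_norm_le hg
  refine ⟨C, hC, fun y hy => ?_⟩
  obtain ⟨x, hx, hxn⟩ := hbound ⟨y, hy⟩
  exact ⟨x, congrArg Subtype.val hx, hxn⟩

theorem exists_preimage_norm_le_of_isClosed [CompleteSpace F] {T : E →ₗ.[𝕜] F} (hT : T.IsClosed)
    (A : F →L[𝕜] G) (S : Submodule 𝕜 G) [CompleteSpace S]
    (hS : S ≤ (LinearMap.range T.toFun).map A.toLinearMap) :
    ∃ C > 0, ∀ y ∈ S, ∃ x : T.domain, A (T x) = y ∧ ‖(x : E)‖ ≤ C * ‖y‖ := by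
  have hgraph : IsClosed (T.graph : Set (E × F)) := hT
  have : CompleteSpace T.graph := hgraph.completeSpace_coe
  let f : T.graph →L[𝕜] G := A ∘L ContinuousLinearMap.snd 𝕜 E F ∘L T.graph.subtypeL
  have hf : S ≤ LinearMap.range f.toLinearMap := by
    intro y hy
    obtain ⟨_, ⟨x, rfl⟩, rfl⟩ := hS hy
    exact ⟨⟨_, T.mem_graph x⟩, rfl⟩
  obtain ⟨C, hC, hbound⟩ := exists_preimage_norm_le_of_le_range f S hf
  refine ⟨C, hC, fun y hy => ?_⟩
  obtain ⟨⟨⟨a, b⟩, hab⟩, rfl, hnorm⟩ := hbound y hy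
  obtain ⟨x, rfl, rfl⟩ := T.mem_graph_iff.mp hab
  exact ⟨x, rfl, (norm_fst_le _).trans hnorm⟩

end OpenMapping

section AmbientKer

variable {R E F : Type*} [CommRing R] [AddCommGroup E] [Module R E] [AddCommGroup F] [Module R F]

/-- The kernel of a partially defined linear operator `T : E →ₗ.[R] F` as a submodule of the ambient
space `E`, whereas `LinearMap.ker T.toFun` is a submodule of the domain of `T`. -/
def ambientKer (T : E →ₗ.[R] F) : Submodule R E :=
  (LinearMap.ker T.toFun).map T.domain.subtype

theorem mem_ambientKer_iff_mem_graph {T : E →ₗ.[R] F} {x : E} :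
    x ∈ ambientKer T ↔ (x, 0) ∈ T.graph := by
  simp only [ambientKer, Submodule.mem_map, LinearMap.mem_ker, LinearPMap.mem_graph_iff,
    Submodule.subtype_apply, LinearPMap.toFun_eq_coe, and_comm]

theorem sub_mem_ambientKer {T : E →ₗ.[R] F} {x y : T.domain} (h : T x = T y) :
    (x - y : E) ∈ ambientKer T := by
  simpa only [mem_ambientKer_iff_mem_graph, Prod.mk_sub_mk, h, sub_self]
    using T.graph.sub_mem (T.mem_graph x) (T.mem_graph y)

theorem mem_graph_domRestrict_iff {T : E →ₗ.[R] F} {K : Submodule R E} {z : E × F} :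
    z ∈ (T.domRestrict K).graph ↔ z ∈ T.graph ∧ z.1 ∈ K := by
  constructor
  · intro hz
    obtain ⟨⟨x, hxK, hx⟩, rfl⟩ := (LinearPMap.mem_graph_iff' _).mp hz
    exact ⟨T.mem_graph ⟨x, hx⟩, hxK⟩
  · rintro ⟨hz, hzK⟩
    obtain ⟨x, rfl⟩ := (LinearPMap.mem_graph_iff' _).mp hz
    exact (T.domRestrict K).mem_graph ⟨x, hzK, x.2⟩

theorem ambientKer_domRestrict (T : E →ₗ.[R] F) (K : Submodule R E) :
    ambientKer (T.domRestrict K) = ambientKer T ⊓ K := by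
  ext x
  simp only [mem_ambientKer_iff_mem_graph, mem_graph_domRestrict_iff, Submodule.mem_inf]

theorem range_domRestrict (T : E →ₗ.[R] F) (K : Submodule R E) :
    (LinearMap.range (T.domRestrict K).toFun : Set F) = T '' {x : T.domain | (x : E) ∈ K} := by
  ext y
  constructor
  · rintro ⟨⟨x, hxK, hx⟩, rfl⟩
    exact ⟨⟨x, hx⟩, hxK, rfl⟩
  · rintro ⟨x, hxK, rfl⟩
    exact ⟨⟨x, hxK, x.2⟩, rfl⟩

variable [TopologicalSpace E] [TopologicalSpace F]

theorem isClosed_ambientKer {T : E →ₗ.[R] F} (hT : T.IsClosed) :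
    IsClosed (ambientKer T : Set E) := by
  have h : (ambientKer T : Set E) = (fun x => (x, (0 : F))) ⁻¹' T.graph :=
    Set.ext fun _ => mem_ambientKer_iff_mem_graph
  rw [h]
  exact IsClosed.preimage (by fun_prop) hT

theorem isClosed_domRestrict {T : E →ₗ.[R] F} (hT : T.IsClosed) {K : Submodule R E}
    (hK : IsClosed (K : Set E)) : (T.domRestrict K).IsClosed := by
  have h : ((T.domRestrict K).graph : Set (E × F)) =
      (T.graph : Set (E × F)) ∩ Prod.fst ⁻¹' (K : Set E) :=
    Set.ext fun _ => mem_graph_domRestrict_iff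
  rw [LinearPMap.IsClosed, h]
  exact IsClosed.inter hT (hK.preimage continuous_fst)

end AmbientKer

section Coercive

variable {𝕜 E F : Type*} [RCLike 𝕜]
  [NormedAddCommGroup E] [InnerProductSpace 𝕜 E]
  [NormedAddCommGroup F]

theorem norm_sub_starProjection_le {N : Submodule 𝕜 E} [N.HasOrthogonalProjection] (u : E) {w : E}
    (hw : w ∈ N) : ‖u - N.starProjection u‖ ≤ ‖u - w‖ := by
  rw [Submodule.starProjection_minimal]
  exact ciInf_le ⟨0, Set.forall_mem_range.mpr fun _ => norm_nonneg _⟩ (⟨w, hw⟩ : N)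

variable [CompleteSpace E] [CompleteSpace F]

theorem exists_norm_sub_starProjection_ambientKer_le [NormedSpace 𝕜 F] {T : E →ₗ.[𝕜] F}
    (hT : T.IsClosed) (hrange : IsClosed (LinearMap.range T.toFun : Set F))
    [(ambientKer T).HasOrthogonalProjection] :
    ∃ D > 0, ∀ u : T.domain, ‖(u : E) - (ambientKer T).starProjection u‖ ≤ D * ‖T u‖ := by
  have : CompleteSpace (LinearMap.range T.toFun) := hrange.completeSpace_coe
  obtain ⟨D, hD, hbound⟩ := exists_preimage_norm_le_of_isClosed hT (.id 𝕜 F)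
    (LinearMap.range T.toFun) (Submodule.map_id _).ge
  refine ⟨D, hD, fun u => ?_⟩
  obtain ⟨v, hv, hnorm⟩ := hbound (T u) ⟨u, rfl⟩
  calc ‖(u : E) - (ambientKer T).starProjection u‖
      ≤ ‖(u : E) - (u - v)‖ := norm_sub_starProjection_le _ (sub_mem_ambientKer hv.symm)
    _ = ‖(v : E)‖ := by rw [sub_sub_cancel]
    _ ≤ D * ‖T u‖ := hnorm

theorem exists_norm_starProjection_le_norm_adjoint [InnerProductSpace 𝕜 F] {T : E →ₗ.[𝕜] F}
    (hd : Dense (T.domain : Set E)) (hT : T.IsClosed)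
    (K N : Submodule 𝕜 F) [K.HasOrthogonalProjection] [CompleteSpace N]
    (hN : N ≤ (LinearMap.range T.toFun).map K.starProjection.toLinearMap) :
    ∃ C > 0, ∀ u : T†.domain, (u : F) ∈ K → ‖N.starProjection (u : F)‖ ≤ C * ‖T† u‖ := by
  obtain ⟨C, hC, hbound⟩ := exists_preimage_norm_le_of_isClosed hT K.starProjection N hN
  refine ⟨C, hC, fun u hu => ?_⟩
  obtain ⟨x, hx, hnorm⟩ := hbound _ (N.starProjection_apply_mem u)
  set w := N.starProjection (u : F)
  have hinner : ⟪(u : F), w⟫_𝕜 = ⟪T† u, (x : E)⟫_𝕜 := by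
    rw [LinearPMap.adjoint_isFormalAdjoint hd u x, ← hx,
      ← K.inner_starProjection_left_eq_right, Submodule.starProjection_eq_self_iff.mpr hu]
  have hsq : ‖w‖ * ‖w‖ ≤ C * ‖T† u‖ * ‖w‖ :=
    calc ‖w‖ * ‖w‖ = RCLike.re ⟪w, (u : F)⟫_𝕜 := by
          rw [N.re_inner_starProjection_eq_normSq, sq, Submodule.coe_norm,
            N.coe_orthogonalProjectionOnto_apply]
      _ = RCLike.re ⟪T† u, (x : E)⟫_𝕜 := by rw [inner_re_symm, hinner]
      _ ≤ ‖⟪T† u, (x : E)⟫_𝕜‖ := RCLike.re_le_norm _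
      _ ≤ ‖T† u‖ * ‖(x : E)‖ := norm_inner_le_norm _ _
      _ ≤ ‖T† u‖ * (C * ‖w‖) := by gcongr
      _ = C * ‖T† u‖ * ‖w‖ := by ring
  obtain hw | hw := (norm_nonneg w).eq_or_lt
  · rw [← hw]; positivity
  · exact le_of_mul_le_mul_right hsq hw

end Coercive

theorem coercive_off_L_of_kernel_conditions_general {𝕜 H₁ H₂ F : Type*} [RCLike 𝕜]
    [NormedAddCommGroup H₁] [InnerProductSpace 𝕜 H₁] [CompleteSpace H₁]
    [NormedAddCommGroup H₂] [InnerProductSpace 𝕜 H₂] [CompleteSpace H₂]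
    [NormedAddCommGroup F] [NormedSpace 𝕜 F] [CompleteSpace F]
    (T₁ : H₁ →ₗ.[𝕜] H₂) (T₂ : H₂ →ₗ.[𝕜] F)
    (hd₁ : Dense (T₁.domain : Set H₁)) (hc₁ : T₁.IsClosed) (hc₂ : T₂.IsClosed)
    (K : Submodule 𝕜 H₂) [K.HasOrthogonalProjection]
    (hproj : ambientKer T₂ ⊓ K ≤ (LinearMap.range T₁.toFun).map K.starProjection.toLinearMap)
    (hclosed : IsClosed (T₂ '' {x : T₂.domain | (x : H₂) ∈ K})) :
    ∃ c : ℝ, 0 < c ∧ ∀ (u : H₂) (hu₁ : u ∈ T₁†.domain) (hu₂ : u ∈ T₂.domain),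
      u ∈ K → c * ‖u‖ ^ 2 ≤ ‖T₁† ⟨u, hu₁⟩‖ ^ 2 + ‖T₂ ⟨u, hu₂⟩‖ ^ 2 := by
  have hK : IsClosed (K : Set H₂) := K.orthogonal_orthogonal ▸ Kᗮ.isClosed_orthogonal
  have hS : (T₂.domRestrict K).IsClosed := isClosed_domRestrict hc₂ hK
  let N := ambientKer (T₂.domRestrict K)
  have : CompleteSpace N := (isClosed_ambientKer hS).completeSpace_coe
  obtain ⟨C, hC, hT₁⟩ := exists_norm_starProjection_le_norm_adjoint hd₁ hc₁ K N
    ((ambientKer_domRestrict T₂ K).trans_le hproj)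
  obtain ⟨D, hD, hT₂⟩ := exists_norm_sub_starProjection_ambientKer_le hS
    ((range_domRestrict T₂ K).symm ▸ hclosed)
  refine ⟨(C ^ 2 + D ^ 2)⁻¹, by positivity, fun u hu₁ hu₂ huK => ?_⟩
  have h₁ := hT₁ ⟨u, hu₁⟩ huK
  have h₂ := hT₂ ⟨u, huK, hu₂⟩
  rw [inv_mul_le_iff₀ (by positivity)]
  calc ‖u‖ ^ 2 = ‖N.starProjection u‖ ^ 2 + ‖u - N.starProjection u‖ ^ 2 := by
        rw [N.norm_sq_eq_add_norm_sq_starProjection u, N.starProjection_orthogonal_val]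
    _ ≤ (C * ‖T₁† ⟨u, hu₁⟩‖) ^ 2 + (D * ‖T₂ ⟨u, hu₂⟩‖) ^ 2 := by gcongr; exact h₂
    _ ≤ (C ^ 2 + D ^ 2) * (‖T₁† ⟨u, hu₁⟩‖ ^ 2 + ‖T₂ ⟨u, hu₂⟩‖ ^ 2) := by
        rw [mul_pow, mul_pow]
        nlinarith [mul_nonneg (sq_nonneg C) (sq_nonneg ‖T₂ ⟨u, hu₂⟩‖),
          mul_nonneg (sq_nonneg D) (sq_nonneg ‖T₁† ⟨u, hu₁⟩‖)]

/-- Suppose there is a finite-dimensional subspace `L ⊆ dom T₁* ∩ ker T₂`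
with `ker T₂ ∩ Lᗮ = P_{Lᗮ}(range T₁)` and such that the range of the restriction of `T₂` to
`dom T₂ ∩ Lᗮ` is closed in `H₃`. Then there is `c > 0` with `‖T₁*u‖² + ‖T₂u‖² ≥ c‖u‖²`
for all `u ∈ dom T₁* ∩ dom T₂` with `u ⊥ L`. -/
theorem coercive_off_L_of_kernel_conditions
    {H₁ H₂ H₃ : Type*}
    [NormedAddCommGroup H₁] [InnerProductSpace ℂ H₁] [CompleteSpace H₁]
    [NormedAddCommGroup H₂] [InnerProductSpace ℂ H₂] [CompleteSpace H₂]
    [NormedAddCommGroup H₃] [InnerProductSpace ℂ H₃] [CompleteSpace H₃]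
    (T₁ : H₁ →ₗ.[ℂ] H₂) (T₂ : H₂ →ₗ.[ℂ] H₃)
    (hd₁ : Dense (T₁.domain : Set H₁)) (hd₂ : Dense (T₂.domain : Set H₂))
    (hc₁ : T₁.IsClosed) (hc₂ : T₂.IsClosed)
    (hrange : LinearMap.range T₁.toFun ≤
      (LinearMap.ker T₂.toFun).map T₂.domain.subtype)
    (L : Submodule ℂ H₂) [FiniteDimensional ℂ L]
    (hL : L ≤ T₁.adjoint.domain ⊓ (LinearMap.ker T₂.toFun).map T₂.domain.subtype)
    (hproj : (((LinearMap.ker T₂.toFun).map T₂.domain.subtype ⊓ Lᗮ : Submodule ℂ H₂) : Set H₂) =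
      (fun w => (Submodule.orthogonalProjectionOnto Lᗮ w : H₂)) '' (LinearMap.range T₁.toFun))
    (hclosed : IsClosed
      ((fun x : T₂.domain => T₂ x) '' {x : T₂.domain | (x : H₂) ∈ Lᗮ} : Set H₃)) :
    ∃ c : ℝ, 0 < c ∧ ∀ (u : H₂) (hu₁ : u ∈ T₁.adjoint.domain) (hu₂ : u ∈ T₂.domain),
      u ∈ Lᗮ → c * ‖u‖ ^ 2 ≤ ‖T₁.adjoint ⟨u, hu₁⟩‖ ^ 2 + ‖T₂ ⟨u, hu₂⟩‖ ^ 2 :=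
  coercive_off_L_of_kernel_conditions_general T₁ T₂ hd₁ hc₁ hc₂ Lᗮ hproj.le hclosed
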